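/- arXiv:1810.03510 — 5 statements merged into one kernel-verified Lean document; each statement's English description precedes it below -/
import Mathlib

section
/- For probability mass functions g and f on a finite type X with f strictly positive, the relative entropy is bounded by the chi-squared divergence: D(g‖f) = Σ_x g(x) ln(g(x)/f(x)) ≤ Σ_x (g(x) − f(x))²/f(x). -/
/-- Pointwise form of the bound, from `log t ≤ t - 1` at `t = a / b`. -/
lemma mul_log_div_le {a b : ℝ} (ha : 0 ≤ a) (hb : 0 < b) :
    a * Real.log (a / b) ≤ (a - b) ^ 2 / b + (a - b) := by
  rcases ha.eq_or_lt with rfl | ha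
  · have : (0 - b) ^ 2 / b + (0 - b) = 0 := by
      field_simp
      ring
    rw [this, zero_mul]
  · calc
      a * Real.log (a / b) ≤ a * (a / b - 1) :=
        mul_le_mul_of_nonneg_left (Real.log_le_sub_one_of_pos (div_pos ha hb)) ha.le
      _ = (a - b) ^ 2 / b + (a - b) := by
        field_simp
        ring

/-- For probability mass functions `g` and `f` on a finite type `X` with `f` strictly
positive, the relative entropy `D(g‖f) = ∑ x, g x * ln (g x / f x)` is bounded by the
chi-squared divergence `∑ x, (g x - f x)^2 / f x`. -/
theorem relativeEntropy_le_chiSquared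
    {X : Type*} [Fintype X] (g f : X → ℝ)
    (hg0 : ∀ x, 0 ≤ g x) (hg1 : ∑ x, g x = 1)
    (hf0 : ∀ x, 0 < f x) (hf1 : ∑ x, f x = 1) :
    ∑ x, g x * Real.log (g x / f x) ≤ ∑ x, (g x - f x) ^ 2 / f x := by
  calc
    ∑ x, g x * Real.log (g x / f x) ≤ ∑ x, ((g x - f x) ^ 2 / f x + (g x - f x)) :=
      Finset.sum_le_sum fun x _ => mul_log_div_le (hg0 x) (hf0 x)
    _ = ∑ x, (g x - f x) ^ 2 / f x := by
      rw [Finset.sum_add_distrib, Finset.sum_sub_distrib, hg1, hf1, sub_self, add_zero]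
end

section
/- In the packet-size modification setup, the function f̃ is itself a probability mass function on Fin K (it is nonnegative and sums to 1), and its relative entropy from f satisfies D(f̃‖f) ≤ 2 ξ² p². -/
/-- Pointwise chi-square bound for a relative entropy summand. -/
lemma mul_log_div_le_of_abs_sub_le {a b c : ℝ} (ha : 0 < a) (hb : 0 < b)
    (h : |b - a| ≤ c * a) : b * Real.log (b / a) ≤ (b - a) + c ^ 2 * a := by
  have hlog : Real.log (b / a) ≤ b / a - 1 := Real.log_le_sub_one_of_pos (div_pos hb ha)
  have hsq : (b - a) ^ 2 ≤ (c * a) ^ 2 := sq_le_sq' (abs_le.mp h).1 (abs_le.mp h).2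
  calc b * Real.log (b / a) ≤ b * (b / a - 1) := by gcongr
    _ = (b - a) + (b - a) ^ 2 / a := by field_simp; ring
    _ ≤ (b - a) + (c * a) ^ 2 / a := by gcongr
    _ = (b - a) + c ^ 2 * a := by field_simp

/-- Packet-size modification setup: `K = 2*m` possible packet sizes with pmf `f`
(strictly positive on `{0, …, 2*m - 1}`), insertion probability `p ∈ (0,1)`,
modified pmf `f̃(j) = (1-p) f(j)` for `j < m` and `f̃(j) = f(j) + p f(j-m)` for
`m ≤ j < 2m`, `ξ₀ = max_{m ≤ j ≤ 2m-1} f(j-m)/f(j)` and `ξ = max 1 ξ₀`.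
Then `f̃` is itself a pmf and `D(f̃‖f) ≤ 2 ξ² p²`. -/
theorem modified_packet_size_pmf_and_relativeEntropy_bound
    (m : ℕ) (hm : 1 ≤ m) (f : ℕ → ℝ)
    (hf0 : ∀ j < 2 * m, 0 < f j) (hf1 : ∑ j ∈ Finset.range (2 * m), f j = 1)
    (p : ℝ) (hp0 : 0 < p) (hp1 : p < 1)
    (ftilde : ℕ → ℝ)
    (hft : ∀ j < 2 * m,
      ftilde j = if j < m then (1 - p) * f j else f j + p * f (j - m))
    (ξ₀ ξ : ℝ)
    (hξ₀ : ξ₀ = (Finset.Icc m (2 * m - 1)).sup'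
      (Finset.nonempty_Icc.mpr (by omega)) (fun j => f (j - m) / f j))
    (hξ : ξ = max 1 ξ₀) :
    (∀ j < 2 * m, 0 ≤ ftilde j) ∧
    (∑ j ∈ Finset.range (2 * m), ftilde j = 1) ∧
    (∑ j ∈ Finset.range (2 * m), ftilde j * Real.log (ftilde j / f j)
      ≤ 2 * ξ ^ 2 * p ^ 2) := by
  have hpos : ∀ j < 2 * m, 0 < ftilde j := by
    intro j hj
    rw [hft j hj]
    split_ifs
    · exact mul_pos (by linarith) (hf0 j hj)
    · exact add_pos (hf0 j hj) (mul_pos hp0 (hf0 _ (by omega)))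
  have hsum : ∑ j ∈ Finset.range (2 * m), ftilde j = 1 := by
    rw [Finset.sum_congr rfl fun j hj => hft j (Finset.mem_range.mp hj), two_mul, Finset.sum_range_add,
      Finset.sum_congr rfl fun j hj => if_pos (Finset.mem_range.mp hj)]
    simp only [Nat.not_lt.mpr (Nat.le_add_right m _), if_false, Nat.add_sub_cancel_left,
      Finset.sum_add_distrib, ← Finset.mul_sum]
    rw [two_mul, Finset.sum_range_add] at hf1
    linear_combination hf1
  have hξ1 : 1 ≤ ξ := hξ ▸ le_max_left _ _
  have habs : ∀ j < 2 * m, |ftilde j - f j| ≤ (ξ * p) * f j := by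
    intro j hj
    have hfj := hf0 j hj
    rw [hft j hj]
    split_ifs with hjm
    · rw [show (1 - p) * f j - f j = -(p * f j) by ring, abs_neg,
        abs_of_pos (mul_pos hp0 hfj)]
      gcongr
      exact le_mul_of_one_le_left hp0.le hξ1
    · have hratio : f (j - m) / f j ≤ ξ := by
        rw [hξ, hξ₀]
        exact (Finset.le_sup' (fun j => f (j - m) / f j)
          (Finset.mem_Icc.mpr ⟨by omega, by omega⟩)).trans (le_max_right _ _)
      rw [add_sub_cancel_left, abs_of_pos (mul_pos hp0 (hf0 _ (by omega)))]
      calc p * f (j - m) ≤ p * (ξ * f j) := by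
            gcongr
            exact (div_le_iff₀ hfj).mp hratio
        _ = ξ * p * f j := by ring
  refine ⟨fun j hj => (hpos j hj).le, hsum, ?_⟩
  calc ∑ j ∈ Finset.range (2 * m), ftilde j * Real.log (ftilde j / f j)
      ≤ ∑ j ∈ Finset.range (2 * m), ((ftilde j - f j) + (ξ * p) ^ 2 * f j) := by
        refine Finset.sum_le_sum fun j hj => ?_
        have hj := Finset.mem_range.mp hj
        exact mul_log_div_le_of_abs_sub_le (hf0 j hj) (hpos j hj) (habs j hj)
    _ = (ξ * p) ^ 2 := by
        rw [Finset.sum_add_distrib, Finset.sum_sub_distrib, ← Finset.mul_sum, hsum, hf1]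
        ring
    _ ≤ 2 * ξ ^ 2 * p ^ 2 := by nlinarith [sq_nonneg (ξ * p)]
end

section
/- (Covertness in Theorem 1/2.) Fix ε ∈ (0, 1/2) and n ≥ 1 large enough that ε/(ξ√n) < 1, and take insertion probability p = ε/(ξ√n) in the packet-size modification setup. Let P₀ be the n-fold product pmf of f on (Fin K)ⁿ and P₁ the n-fold product pmf of f̃ on (Fin K)ⁿ. Then for every subset A ⊆ (Fin K)ⁿ (Willie's rejection region), the detection error probability satisfies (P₀(A) + 1 − P₁(A))/2 ≥ 1/2 − ε; that is, Willie's error probability P_e = (P_FA + P_MD)/2 is at least 1/2 − ε. -/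
/-- The change of probability of an event is bounded by the chi-squared divergence. -/
lemma sq_sum_sub_le_chi_sq {Ω : Type*} [Fintype Ω] (P Q : Ω → ℝ) (hP : ∀ x, 0 < P x)
    (hP1 : ∑ x, P x = 1) (hQ1 : ∑ x, Q x = 1) (A : Finset Ω) :
    (∑ x ∈ A, Q x - ∑ x ∈ A, P x) ^ 2 ≤ ∑ x, Q x ^ 2 / P x - 1 := by
  have expand : ∑ x, (Q x - P x) ^ 2 / P x = ∑ x, Q x ^ 2 / P x - 1 := by
    have pointwise : ∀ x, (Q x - P x) ^ 2 / P x = Q x ^ 2 / P x - 2 * Q x + P x := fun x => by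
      have := (hP x).ne'
      field_simp
      ring
    simp only [pointwise, Finset.sum_add_distrib, Finset.sum_sub_distrib, ← Finset.mul_sum, hP1,
      hQ1]
    ring
  have term_nonneg : ∀ x, 0 ≤ (Q x - P x) ^ 2 / P x := fun x =>
    div_nonneg (sq_nonneg _) (hP x).le
  rw [← Finset.sum_sub_distrib, ← expand]
  calc (∑ x ∈ A, (Q x - P x)) ^ 2
      ≤ (∑ x ∈ A, (Q x - P x) ^ 2 / P x) * ∑ x ∈ A, P x :=
        Finset.sum_sq_le_sum_mul_sum_of_sq_le_mul A (fun x _ => term_nonneg x)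
          (fun x _ => (hP x).le) (fun x _ => (div_mul_cancel₀ _ (hP x).ne').ge)
    _ ≤ (∑ x, (Q x - P x) ^ 2 / P x) * 1 := by
        refine mul_le_mul ?_ ?_ (Finset.sum_nonneg fun x _ => (hP x).le)
          (Finset.sum_nonneg fun x _ => term_nonneg x)
        · exact Finset.sum_le_univ_sum_of_nonneg term_nonneg
        · exact hP1 ▸ Finset.sum_le_univ_sum_of_nonneg fun x => (hP x).le
    _ = _ := mul_one _

/-- The chi-squared bound for the `n`-fold products of two probability mass functions. -/
lemma sq_sum_prod_sub_le {α : Type*} [Fintype α] (g h : α → ℝ) (hg : ∀ a, 0 < g a)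
    (hg1 : ∑ a, g a = 1) (hh1 : ∑ a, h a = 1) (n : ℕ) (A : Finset (Fin n → α)) :
    (∑ x ∈ A, ∏ i, h (x i) - ∑ x ∈ A, ∏ i, g (x i)) ^ 2 ≤ (∑ a, h a ^ 2 / g a) ^ n - 1 := by
  have key := sq_sum_sub_le_chi_sq (fun x : Fin n → α => ∏ i, g (x i)) (fun x => ∏ i, h (x i))
    (fun x => Finset.prod_pos fun i _ => hg _)
    (by rw [← Fintype.sum_pow, hg1, one_pow]) (by rw [← Fintype.sum_pow, hh1, one_pow]) A
  simpa only [Fintype.sum_pow, Finset.prod_div_distrib, Finset.prod_pow] using key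

/-- Covertness in Theorems 1/2: with insertion probability `p = ε/(ξ√n)` in the
packet-size modification setup, for every rejection region `A ⊆ (Fin K)ⁿ` of Willie's
detector, where `P₀` and `P₁` are the `n`-fold products of `f` and `f̃`, the error
probability `(P₀(A) + 1 - P₁(A))/2` is at least `1/2 - ε`. -/
theorem covertness_of_bit_insertion
    (m : ℕ) (hm : 1 ≤ m) (f : ℕ → ℝ)
    (hf0 : ∀ j < 2 * m, 0 < f j) (hf1 : ∑ j ∈ Finset.range (2 * m), f j = 1)
    (ξ₀ ξ : ℝ)
    (hξ₀ : ξ₀ = (Finset.Icc m (2 * m - 1)).sup'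
      (Finset.nonempty_Icc.mpr (by omega)) (fun j => f (j - m) / f j))
    (hξ : ξ = max 1 ξ₀)
    (ε : ℝ) (hε0 : 0 < ε) (hε1 : ε < 1 / 2)
    (n : ℕ) (hn : 1 ≤ n)
    (p : ℝ) (hp : p = ε / (ξ * Real.sqrt n)) (hp1 : p < 1)
    (ftilde : ℕ → ℝ)
    (hft : ∀ j < 2 * m,
      ftilde j = if j < m then (1 - p) * f j else f j + p * f (j - m)) :
    ∀ A : Finset (Fin n → Fin (2 * m)),
      ((∑ x ∈ A, ∏ i, f (x i).val) + (1 - ∑ x ∈ A, ∏ i, ftilde (x i).val)) / 2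
        ≥ 1 / 2 - ε := by
  intro A
  have one_le_ξ : 1 ≤ ξ := hξ ▸ le_max_left _ _
  have ratio_le : ∀ j < m, f j / f (m + j) ≤ ξ := fun j hj => by
    rw [hξ, hξ₀]
    refine le_trans ?_ (le_max_right _ _)
    have := Finset.le_sup' (fun j => f (j - m) / f j)
      (Finset.mem_Icc.mpr (by omega : m ≤ m + j ∧ m + j ≤ 2 * m - 1))
    simpa only [Nat.add_sub_cancel_left] using this
  have split_sum : ∀ u : ℕ → ℝ, ∑ j ∈ Finset.range (2 * m), u j
      = ∑ j ∈ Finset.range m, u j + ∑ j ∈ Finset.range m, u (m + j) := fun u => by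
    rw [two_mul, Finset.sum_range_add]
  have hft_low : ∀ j ∈ Finset.range m, ftilde j = (1 - p) * f j := fun j hj => by
    have hj := Finset.mem_range.mp hj
    rw [hft j (by omega), if_pos hj]
  have hft_high : ∀ j ∈ Finset.range m, ftilde (m + j) = f (m + j) + p * f j := fun j hj => by
    have hj := Finset.mem_range.mp hj
    rw [hft (m + j) (by omega), if_neg (by omega), Nat.add_sub_cancel_left]
  have hf1' := hf1
  rw [split_sum] at hf1'
  have hft1 : ∑ j ∈ Finset.range (2 * m), ftilde j = 1 := by
    rw [split_sum, Finset.sum_congr rfl hft_low, Finset.sum_congr rfl hft_high,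
      Finset.sum_add_distrib, ← Finset.mul_sum, ← Finset.mul_sum]
    linarith
  have low_le_one : ∑ j ∈ Finset.range m, f j ≤ 1 := by
    have : 0 ≤ ∑ j ∈ Finset.range m, f (m + j) := Finset.sum_nonneg fun j hj =>
      (hf0 _ (by have := Finset.mem_range.mp hj; omega)).le
    linarith
  have hn0 : (0 : ℝ) < n := by exact_mod_cast hn
  have hp_sq : 2 * ξ * p ^ 2 ≤ 2 * ε ^ 2 / n := by
    have ξ_pos : 0 < ξ := by linarith
    rw [hp, div_pow, mul_pow, Real.sq_sqrt hn0.le]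
    calc 2 * ξ * (ε ^ 2 / (ξ ^ 2 * n)) = 2 * ε ^ 2 / n / ξ := by field_simp
      _ ≤ 2 * ε ^ 2 / n := div_le_self (by positivity) one_le_ξ
  have chi_sq : ∑ j ∈ Finset.range (2 * m), ftilde j ^ 2 / f j ≤ 1 + 2 * ε ^ 2 / n := by
    have low : ∀ j ∈ Finset.range m, ftilde j ^ 2 / f j ≤ (1 - p) ^ 2 * f j := fun j hj => by
      have := (hf0 j (by have := Finset.mem_range.mp hj; omega)).ne'
      rw [hft_low j hj]
      apply le_of_eq
      field_simp
    have high : ∀ j ∈ Finset.range m,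
        ftilde (m + j) ^ 2 / f (m + j) ≤ f (m + j) + (2 * p + p ^ 2 * ξ) * f j := fun j hj => by
      have hjm := Finset.mem_range.mp hj
      have pos_low := hf0 j (by omega)
      have := (hf0 (m + j) (by omega)).ne'
      rw [hft_high j hj]
      calc (f (m + j) + p * f j) ^ 2 / f (m + j)
          = f (m + j) + 2 * p * f j + p ^ 2 * f j * (f j / f (m + j)) := by
            field_simp
            ring
        _ ≤ f (m + j) + 2 * p * f j + p ^ 2 * f j * ξ := by
            gcongr
            exact ratio_le j hjm
        _ = _ := by ring
    have bound := add_le_add (Finset.sum_le_sum low) (Finset.sum_le_sum high)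
    rw [← split_sum fun j => ftilde j ^ 2 / f j, Finset.sum_add_distrib, ← Finset.mul_sum,
      ← Finset.mul_sum] at bound
    have : p ^ 2 * (1 + ξ) * ∑ j ∈ Finset.range m, f j ≤ p ^ 2 * (1 + ξ) * 1 :=
      mul_le_mul_of_nonneg_left low_le_one (by positivity)
    nlinarith [sq_nonneg p]
  have key := sq_sum_prod_sub_le (fun a : Fin (2 * m) => f a) (fun a => ftilde a)
    (fun a => hf0 a a.2) (by rw [Fin.sum_univ_eq_sum_range f, hf1])
    (by rw [Fin.sum_univ_eq_sum_range ftilde, hft1]) n A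
  rw [Fin.sum_univ_eq_sum_range fun j => ftilde j ^ 2 / f j] at key
  have pow_bound : (∑ j ∈ Finset.range (2 * m), ftilde j ^ 2 / f j) ^ n
      ≤ Real.exp (2 * ε ^ 2) := by
    have nonneg : 0 ≤ ∑ j ∈ Finset.range (2 * m), ftilde j ^ 2 / f j :=
      Finset.sum_nonneg fun j hj => div_nonneg (sq_nonneg _) (hf0 j (Finset.mem_range.mp hj)).le
    calc _ ≤ Real.exp (2 * ε ^ 2 / n) ^ n := by
          refine pow_le_pow_left₀ nonneg (chi_sq.trans ?_) n
          linarith [Real.add_one_le_exp (2 * ε ^ 2 / n)]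
      _ = Real.exp (2 * ε ^ 2) := by
          rw [← Real.exp_nat_mul, mul_div_cancel₀ _ hn0.ne']
  have exp_bound : Real.exp (2 * ε ^ 2) - 1 ≤ 2 * (2 * ε ^ 2) := by
    have nonneg : 0 ≤ 2 * ε ^ 2 := by positivity
    have := Real.abs_exp_sub_one_le (x := 2 * ε ^ 2) (by rw [abs_of_nonneg nonneg]; nlinarith)
    rw [abs_of_nonneg nonneg] at this
    exact (le_abs_self _).trans this
  have := abs_le_of_sq_le_sq' (a := ∑ x ∈ A, ∏ i, ftilde (x i).val - ∑ x ∈ A, ∏ i, f (x i).val)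
    (b := 2 * ε) (by linarith) (by linarith)
  linarith [this.2]
end

section
/- For every real r with 0 ≤ r < 1, the relative entropy between the Bernoulli pmf with success probability (1+r)/2 and the fair Bernoulli pmf (success probability 1/2) equals ((1−r)/2)·ln(1−r) + ((1+r)/2)·ln(1+r), and this quantity is at most r². -/
/-- For `0 ≤ r < 1`, the relative entropy between the Bernoulli pmf with success
probability `(1+r)/2` and the fair Bernoulli pmf equals
`((1-r)/2) ln(1-r) + ((1+r)/2) ln(1+r)`, and this quantity is at most `r²`. -/
theorem bernoulli_relativeEntropy_eq_and_le
    (r : ℝ) (h0 : 0 ≤ r) (h1 : r < 1) :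
    (∑ b : Bool,
        (if b then (1 + r) / 2 else (1 - r) / 2)
          * Real.log ((if b then (1 + r) / 2 else (1 - r) / 2) / (1 / 2))
      = ((1 - r) / 2) * Real.log (1 - r) + ((1 + r) / 2) * Real.log (1 + r)) ∧
    ((1 - r) / 2) * Real.log (1 - r) + ((1 + r) / 2) * Real.log (1 + r) ≤ r ^ 2 := by
  constructor
  · have hp : (1 + r) / 2 / (1 / 2) = 1 + r := by ring
    have hm : (1 - r) / 2 / (1 / 2) = 1 - r := by ring
    simp only [Fintype.sum_bool, if_true, Bool.false_eq_true, if_false, hp, hm]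
    ring
  · have hm := Real.log_le_sub_one_of_pos (show 0 < 1 - r by linarith)
    have hp := Real.log_le_sub_one_of_pos (show 0 < 1 + r by linarith)
    calc (1 - r) / 2 * Real.log (1 - r) + (1 + r) / 2 * Real.log (1 + r)
        ≤ (1 - r) / 2 * (1 - r - 1) + (1 + r) / 2 * (1 + r - 1) :=
          add_le_add (mul_le_mul_of_nonneg_left hm (by linarith))
            (mul_le_mul_of_nonneg_left hp (by linarith))
      _ = r ^ 2 := by ring
end

section
/- (Flag-bit covertness, Eq. (19).) In the packet-size modification setup, for each j with m ≤ j ≤ K−1 define r_j = p·f(j−m) / ( (1−p)·f(j) + p·f(j−m) ). Then each r_j ∈ [0,1), r_j ≤ ξ₀·p/(1−p), and Σ_{j=m}^{K−1} f̃(j) · [ ((1−r_j)/2)·ln(1−r_j) + ((1+r_j)/2)·ln(1+r_j) ] ≤ ( ξ₀·p/(1−p) )². -/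
/-- The relative entropy between the Bernoulli pmf with parameter `(1 - r) / 2` and the fair one
is at most `r ^ 2`. -/
lemma bernoulli_relEntropy_le_sq {r : ℝ} (h0 : 0 ≤ r) (h1 : r < 1) :
    ((1 - r) / 2) * Real.log (1 - r) + ((1 + r) / 2) * Real.log (1 + r) ≤ r ^ 2 := by
  have hneg : Real.log (1 - r) ≤ (1 - r) - 1 := Real.log_le_sub_one_of_pos (by linarith)
  have hpos : Real.log (1 + r) ≤ (1 + r) - 1 := Real.log_le_sub_one_of_pos (by linarith)
  have hneg' := mul_le_mul_of_nonneg_left hneg (show 0 ≤ (1 - r) / 2 by linarith)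
  have hpos' := mul_le_mul_of_nonneg_left hpos (show 0 ≤ (1 + r) / 2 by linarith)
  linarith

/-- If `a / b ≤ ξ`, then `p a / ((1 - p) b + p a)` lies in `[0, 1)` and is at most
`ξ p / (1 - p)`. -/
lemma mixture_ratio_bounds {a b p ξ : ℝ} (ha : 0 < a) (hb : 0 < b) (hp0 : 0 < p) (hp1 : p < 1)
    (hξ : a / b ≤ ξ) :
    0 ≤ p * a / ((1 - p) * b + p * a) ∧ p * a / ((1 - p) * b + p * a) < 1 ∧
      p * a / ((1 - p) * b + p * a) ≤ ξ * p / (1 - p) := by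
  have hq : 0 < 1 - p := sub_pos.mpr hp1
  have hqb : 0 < (1 - p) * b := mul_pos hq hb
  have hpa : 0 < p * a := mul_pos hp0 ha
  refine ⟨by positivity, ?_, ?_⟩
  · rw [div_lt_one (by positivity)]
    linarith
  · calc p * a / ((1 - p) * b + p * a) ≤ p * a / ((1 - p) * b) := by
          gcongr
          linarith
      _ = (a / b) * p / (1 - p) := by field_simp
      _ ≤ ξ * p / (1 - p) := by gcongr

/-- The modified pmf puts mass at most one on the upper half of the sizes. -/
lemma sum_upper_half_add_mul_le_one {m : ℕ} {f : ℕ → ℝ} (hf0 : ∀ j < 2 * m, 0 < f j)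
    (hf1 : ∑ j ∈ Finset.range (2 * m), f j = 1) {p : ℝ} (hp1 : p < 1) :
    ∑ j ∈ Finset.Ico m (2 * m), (f j + p * f (j - m)) ≤ 1 := by
  have hshift : ∑ j ∈ Finset.Ico m (2 * m), f (j - m) = ∑ j ∈ Finset.range m, f j := by
    rw [Finset.sum_Ico_eq_sum_range, show 2 * m - m = m by omega]
    simp
  have hsplit := Finset.sum_range_add_sum_Ico f (show m ≤ 2 * m by omega)
  have hlow : 0 ≤ ∑ j ∈ Finset.range m, f j :=
    Finset.sum_nonneg fun j hj => (hf0 j (by have := Finset.mem_range.mp hj; omega)).le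
  rw [Finset.sum_add_distrib, ← Finset.mul_sum, hshift]
  nlinarith

/-- Flag-bit covertness (Eq. (19)): in the packet-size modification setup, with
`r_j = p f(j-m) / ((1-p) f(j) + p f(j-m))` for `m ≤ j ≤ K-1`, each `r_j ∈ [0,1)`,
`r_j ≤ ξ₀ p/(1-p)`, and the `f̃`-weighted sum of the Bernoulli relative entropies
`((1-r_j)/2) ln(1-r_j) + ((1+r_j)/2) ln(1+r_j)` is at most `(ξ₀ p/(1-p))²`. -/
theorem flag_bit_covertness_bound
    (m : ℕ) (hm : 1 ≤ m) (f : ℕ → ℝ)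
    (hf0 : ∀ j < 2 * m, 0 < f j) (hf1 : ∑ j ∈ Finset.range (2 * m), f j = 1)
    (p : ℝ) (hp0 : 0 < p) (hp1 : p < 1)
    (ftilde : ℕ → ℝ)
    (hft : ∀ j < 2 * m,
      ftilde j = if j < m then (1 - p) * f j else f j + p * f (j - m))
    (ξ₀ : ℝ)
    (hξ₀ : ξ₀ = (Finset.Icc m (2 * m - 1)).sup'
      (Finset.nonempty_Icc.mpr (by omega)) (fun j => f (j - m) / f j))
    (r : ℕ → ℝ)
    (hr : ∀ j, m ≤ j → j < 2 * m →
      r j = p * f (j - m) / ((1 - p) * f j + p * f (j - m))) :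
    (∀ j, m ≤ j → j < 2 * m →
      0 ≤ r j ∧ r j < 1 ∧ r j ≤ ξ₀ * p / (1 - p)) ∧
    (∑ j ∈ Finset.Icc m (2 * m - 1),
        ftilde j * (((1 - r j) / 2) * Real.log (1 - r j)
          + ((1 + r j) / 2) * Real.log (1 + r j))
      ≤ (ξ₀ * p / (1 - p)) ^ 2) := by
  have hIcc : Finset.Icc m (2 * m - 1) = Finset.Ico m (2 * m) := by
    ext j
    simp only [Finset.mem_Icc, Finset.mem_Ico]
    omega
  have hbounds : ∀ j, m ≤ j → j < 2 * m → 0 ≤ r j ∧ r j < 1 ∧ r j ≤ ξ₀ * p / (1 - p) := by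
    intro j hmj hj
    rw [hr j hmj hj]
    refine mixture_ratio_bounds (hf0 _ (by omega)) (hf0 j hj) hp0 hp1 ?_
    rw [hξ₀]
    exact Finset.le_sup' (fun j => f (j - m) / f j) (Finset.mem_Icc.mpr ⟨hmj, by omega⟩)
  refine ⟨hbounds, ?_⟩
  rw [hIcc]
  calc _ ≤ ∑ j ∈ Finset.Ico m (2 * m), (f j + p * f (j - m)) * (ξ₀ * p / (1 - p)) ^ 2 := by
        refine Finset.sum_le_sum fun j hj => ?_
        obtain ⟨hmj, hj⟩ := Finset.mem_Ico.mp hj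
        obtain ⟨h0, h1, hle⟩ := hbounds j hmj hj
        rw [hft j hj, if_neg (by omega)]
        have hfj := hf0 j hj
        have hfjm := hf0 (j - m) (by omega)
        exact mul_le_mul_of_nonneg_left
          ((bernoulli_relEntropy_le_sq h0 h1).trans (pow_le_pow_left₀ h0 hle 2)) (by positivity)
    _ = (∑ j ∈ Finset.Ico m (2 * m), (f j + p * f (j - m))) * (ξ₀ * p / (1 - p)) ^ 2 := by
        rw [Finset.sum_mul]
    _ ≤ (ξ₀ * p / (1 - p)) ^ 2 :=
        mul_le_of_le_one_left (sq_nonneg _) (sum_upper_half_add_mul_le_one hf0 hf1 hp1)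
end
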